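/- For each k ≥ 2, over the alphabet {a, b} the language L_k = ⋃_{i=1}^{k} (a bⁱ)* is recognized by some one-way reversible automaton with multiple initial states (MRFA) having exactly k initial states, but is not recognized by any MRFA with fewer than k initial states. -/

import Mathlib

open scoped Classical

/-- Run a partial transition function along a word. -/
def runP {A Q : Type} (d : A → Q → Option Q) (q : Q) (w : List A) : Option Q :=
  w.foldl (fun o a => o.bind (d a)) (some q)

/-- One-way reversible finite automaton (1RFA): a partial deterministic automaton
with a single initial state and injective transition functions. -/
structure RFA (A Q : Type) where
  start : Q
  next : A → Q → Option Q
  inj : ∀ a q q' r, next a q = some r → next a q' = some r → q = q'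
  accept : Set Q

def RFA.Language {A Q : Type} (M : RFA A Q) : Set (List A) :=
  {w | ∃ qf ∈ M.accept, runP M.next M.start w = some qf}

/-- A permutation automaton (1PerFA): every transition function is a totally
defined bijection. -/
def RFA.IsPerm {A Q : Type} (M : RFA A Q) : Prop :=
  (∀ a q, (M.next a q).isSome) ∧ ∀ a r, ∃ q, M.next a q = some r

/-- One-way reversible finite automaton with multiple initial states (MRFA). -/
structure MRFA (A Q : Type) where
  init : Set Q
  next : A → Q → Option Q
  inj : ∀ a q q' r, next a q = some r → next a q' = some r → q = q'
  accept : Set Q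

def MRFA.Language {A Q : Type} (M : MRFA A Q) : Set (List A) :=
  {w | ∃ q0 ∈ M.init, ∃ qf ∈ M.accept, runP M.next q0 w = some qf}

def Rec1RFA (A : Type) (L : Set (List A)) : Prop :=
  ∃ (Q : Type) (_ : Fintype Q) (M : RFA A Q), M.Language = L

def Rec1RFA1 (A : Type) (L : Set (List A)) : Prop :=
  ∃ (Q : Type) (_ : Fintype Q) (M : RFA A Q), M.accept.ncard = 1 ∧ M.Language = L

def Rec1PerFA (A : Type) (L : Set (List A)) : Prop :=
  ∃ (Q : Type) (_ : Fintype Q) (M : RFA A Q), M.IsPerm ∧ M.Language = L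

def Rec1PerFA1 (A : Type) (L : Set (List A)) : Prop :=
  ∃ (Q : Type) (_ : Fintype Q) (M : RFA A Q),
    M.IsPerm ∧ M.accept.ncard = 1 ∧ M.Language = L

def RecMRFA (A : Type) (L : Set (List A)) : Prop :=
  ∃ (Q : Type) (_ : Fintype Q) (M : MRFA A Q), M.Language = L

/-- Sweeping reversible automaton (sRFA), given without its accepting set:
states `Qp` move rightwards, states `Qm` move leftwards; `startT` is the
transition of the left end-marker function on the initial state, `turnL` its
restriction to `Qm`, and `turnR` is the transition function at the right
end-marker.  All transition functions are partial and injective, and the left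
end-marker function is injective on the whole of `{q₀} ∪ Q₋`. -/
structure SRFA (A Qp Qm : Type) where
  start : Qp
  nextP : A → Qp → Option Qp
  nextM : A → Qm → Option Qm
  startT : Option Qp
  turnL : Qm → Option Qp
  turnR : Qp → Option Qm
  injP : ∀ a q q' r, nextP a q = some r → nextP a q' = some r → q = q'
  injM : ∀ a q q' r, nextM a q = some r → nextM a q' = some r → q = q'
  injL : ∀ q q' r, turnL q = some r → turnL q' = some r → q = q'
  injR : ∀ q q' r, turnR q = some r → turnR q' = some r → q = q'
  startT_ne_turnL : ∀ q r, startT = some r → turnL q ≠ some r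

/-- One step of a sweeping automaton on input `⊢w⊣`: a configuration is a state
together with a head position in `{0, 1, …, |w| + 1}`, where position `0` is the
left end-marker, position `i` with `1 ≤ i ≤ |w|` carries the `i`-th input
symbol, and position `|w| + 1` is the right end-marker.  The result is `none`
when the corresponding transition is undefined and the computation halts. -/
noncomputable def SRFA.step {A Qp Qm : Type} (M : SRFA A Qp Qm) (w : List A) :
    (Qp ⊕ Qm) × ℕ → Option ((Qp ⊕ Qm) × ℕ)
  | (Sum.inl q, i) =>
      if i = 0 then
        if q = M.start then M.startT.map (fun p => (Sum.inl p, 1)) else none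
      else if i = w.length + 1 then
        (M.turnR q).map (fun r => (Sum.inr r, w.length))
      else
        (w[i - 1]?.bind (fun a => M.nextP a q)).map (fun p => (Sum.inl p, i + 1))
  | (Sum.inr q, i) =>
      if i = 0 then (M.turnL q).map (fun p => (Sum.inl p, 1))
      else if i = w.length + 1 then none
      else (w[i - 1]?.bind (fun a => M.nextM a q)).map (fun r => (Sum.inr r, i - 1))

/-- The configuration reached after `n` steps of the computation on `w`,
starting in the initial state at the left end-marker (or `none` if the
computation has halted before). -/
noncomputable def SRFA.steps {A Qp Qm : Type} (M : SRFA A Qp Qm) (w : List A) :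
    ℕ → Option ((Qp ⊕ Qm) × ℕ)
  | 0 => some (Sum.inl M.start, 0)
  | n + 1 => (M.steps w n).bind (M.step w)

/-- Acceptance of an ordinary sRFA: the computation halts at the right
end-marker in an accepting state `q ∈ F ⊆ Q₊`. -/
def SRFA.AcceptsR {A Qp Qm : Type} (M : SRFA A Qp Qm) (F : Set Qp) (w : List A) : Prop :=
  ∃ n q, M.steps w n = some (Sum.inl q, w.length + 1) ∧ q ∈ F ∧
    M.step w (Sum.inl q, w.length + 1) = none

def SRFA.LangR {A Qp Qm : Type} (M : SRFA A Qp Qm) (F : Set Qp) : Set (List A) :=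
  {w | M.AcceptsR F w}

/-- Acceptance of an sRFA with acceptance at both sides: the computation halts
at either end-marker in an accepting state `c ∈ F ⊆ Q₊ ∪ Q₋`. -/
def SRFA.AcceptsB {A Qp Qm : Type} (M : SRFA A Qp Qm) (F : Set (Qp ⊕ Qm)) (w : List A) : Prop :=
  ∃ n c i, M.steps w n = some (c, i) ∧ c ∈ F ∧ (i = 0 ∨ i = w.length + 1) ∧
    M.step w (c, i) = none

def SRFA.LangB {A Qp Qm : Type} (M : SRFA A Qp Qm) (F : Set (Qp ⊕ Qm)) : Set (List A) :=
  {w | M.AcceptsB F w}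

def RecSRFA (A : Type) (L : Set (List A)) : Prop :=
  ∃ (Qp Qm : Type) (_ : Fintype Qp) (_ : Fintype Qm) (M : SRFA A Qp Qm) (F : Set Qp),
    M.LangR F = L

/-- The string `a bⁱ`, with `a = false` and `b = true`. -/
def abWord (i : ℕ) : List Bool := false :: List.replicate i true

/-- The language `L_k = ⋃_{i=1}^{k} (a bⁱ)*`. -/
def Lstar (k : ℕ) : Set (List Bool) :=
  {w | ∃ i, 1 ≤ i ∧ i ≤ k ∧ ∃ n : ℕ, w = (List.replicate n (abWord i)).flatten}

/-!
Lower bound: with `N` states, reading `uᴺ` repeats a state at two boundaries between copies of `u`,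
and reversibility pushes this repetition back to the initial state, which therefore lies on a cycle
labelled `uᵐ` with `m > 0`.  If the same initial state also served `v ≠ u`, the automaton would
accept `uᵐ vⁿ`, which for words `u`, `v` of a uniquely decodable code is not a power of a codeword.

Upper bound: a cycle labelled by the letters of `u` accepts `u*` and is reversible, because the
successor map of a cycle is a bijection; one such cycle is taken for each codeword.
-/

/-- The power `uⁿ` of a word `u`, written so as to unfold to the expression in `Lstar`; `u*` is
`Set.range (wordPow u)`. -/
def wordPow {A : Type*} (u : List A) (n : ℕ) : List A := (List.replicate n u).flatten

section WordPow

variable {A : Type*} (u : List A)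

@[simp]
theorem wordPow_zero : wordPow u 0 = [] := rfl

theorem wordPow_succ (n : ℕ) : wordPow u (n + 1) = u ++ wordPow u n := by
  simp [wordPow, List.replicate_succ]

theorem wordPow_add (m n : ℕ) : wordPow u (m + n) = wordPow u m ++ wordPow u n := by
  simp only [wordPow, List.replicate_add, List.flatten_append]

end WordPow

section Code

variable {A : Type*} {S : Set (List A)}

theorem eq_of_wordPow_append_wordPow_eq (hS : InformationTheory.UniquelyDecodable S)
    {u v w : List A} (hu : u ∈ S) (hv : v ∈ S) (hw : w ∈ S) {m n t : ℕ} (hm : 0 < m) (hn : 0 < n)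
    (h : wordPow u m ++ wordPow v n = wordPow w t) : u = v := by
  have factors : List.replicate m u ++ List.replicate n v = List.replicate t w := by
    refine hS _ _ (fun x hx => ?_) (fun x hx => List.eq_of_mem_replicate hx ▸ hw) ?_
    · rcases List.mem_append.1 hx with hx | hx
      · exact List.eq_of_mem_replicate hx ▸ hu
      · exact List.eq_of_mem_replicate hx ▸ hv
    · simpa [wordPow] using h
  have eq_w : ∀ x ∈ List.replicate m u ++ List.replicate n v, x = w := fun x hx =>
    List.eq_of_mem_replicate (factors ▸ hx)
  rw [eq_w u (by simp [hm.ne']), eq_w v (by simp [hn.ne'])]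

theorem takeWhile_ne_append_flatten {a : A} {v : List A} (hv : a ∉ v) {L : List (List A)}
    (hL : ∀ w ∈ L, w.head? = some a) :
    (v ++ L.flatten).takeWhile (· ≠ a) = v := by
  rw [List.takeWhile_append_of_pos fun x hx => decide_eq_true (ne_of_mem_of_not_mem hx hv)]
  cases L with
  | nil => simp
  | cons w L =>
    obtain ⟨t, rfl⟩ := List.head?_eq_some_iff.1 (hL w List.mem_cons_self)
    simp

theorem uniquelyDecodable_of_notMem_tail {a : A} (hS : ∀ w ∈ S, ∃ v, w = a :: v ∧ a ∉ v) :
    InformationTheory.UniquelyDecodable S := by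
  have head_eq {L : List (List A)} (hL : ∀ w ∈ L, w ∈ S) : ∀ w ∈ L, w.head? = some a := by
    intro w hw
    obtain ⟨v, rfl, -⟩ := hS w (hL w hw)
    rfl
  intro L L' hL hL' h
  induction L generalizing L' with
  | nil =>
    cases L' with
    | nil => rfl
    | cons w' L' =>
      obtain ⟨v', rfl, -⟩ := hS w' (hL' _ List.mem_cons_self)
      simp at h
  | cons w L ih =>
    obtain ⟨v, rfl, hv⟩ := hS w (hL _ List.mem_cons_self)
    cases L' with
    | nil => simp at h
    | cons w' L' =>
      obtain ⟨v', rfl, hv'⟩ := hS w' (hL' _ List.mem_cons_self)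
      rw [List.forall_mem_cons] at hL hL'
      have tails : v ++ L.flatten = v' ++ L'.flatten := by simpa using h
      obtain rfl : v = v' := by
        rw [← takeWhile_ne_append_flatten hv (head_eq hL.2), tails,
          takeWhile_ne_append_flatten hv' (head_eq hL'.2)]
      rw [ih L' hL.2 hL'.2 (List.append_cancel_left tails)]

end Code

theorem abWord_injective : Function.Injective abWord := fun i j h => by
  simpa [abWord] using h

theorem uniquelyDecodable_image_abWord (s : Set ℕ) :
    InformationTheory.UniquelyDecodable (abWord '' s) := by
  refine uniquelyDecodable_of_notMem_tail (a := false) ?_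
  rintro _ ⟨i, -, rfl⟩
  exact ⟨_, rfl, by simp⟩

theorem Lstar_eq_iUnion_range_wordPow (k : ℕ) :
    Lstar k = ⋃ u ∈ abWord '' Set.Icc 1 k, Set.range (wordPow u) := by
  ext w
  simp [Lstar, wordPow, eq_comm (b := w), and_assoc, and_left_comm]

theorem ncard_image_abWord_Icc (k : ℕ) : (abWord '' Set.Icc 1 k).ncard = k := by
  simp [Set.ncard_image_of_injective _ abWord_injective]

section RunP

variable {A Q : Type} {d : A → Q → Option Q}

theorem runP_cons (q : Q) (a : A) (w : List A) :
    runP d q (a :: w) = (d a q).bind fun r => runP d r w := by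
  have none_absorbs (v : List A) : v.foldl (fun o b => o.bind (d b)) none = none := by
    induction v with
    | nil => rfl
    | cons _ _ ih => exact ih
  cases h : d a q with
  | none => simp [runP, h, none_absorbs]
  | some r => simp [runP, h]

theorem runP_append (q : Q) (v w : List A) :
    runP d q (v ++ w) = (runP d q v).bind fun r => runP d r w := by
  induction v generalizing q with
  | nil => rfl
  | cons a v ih => simp only [List.cons_append, runP_cons, ih, Option.bind_assoc]

theorem runP_injective (hd : ∀ a q q' r, d a q = some r → d a q' = some r → q = q')
    {w : List A} {q q' r : Q} (h : runP d q w = some r) (h' : runP d q' w = some r) :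
    q = q' := by
  induction w generalizing q q' with
  | nil => exact Option.some.inj (h.trans h'.symm)
  | cons a w ih =>
    rw [runP_cons, Option.bind_eq_some_iff] at h h'
    obtain ⟨p, hqp, hp⟩ := h
    obtain ⟨p', hqp', hp'⟩ := h'
    obtain rfl := ih hp hp'
    exact hd a q q' p hqp hqp'

theorem exists_runP_wordPow_of_le {q r : Q} {u : List A} {m n : ℕ}
    (h : runP d q (wordPow u n) = some r) (hmn : m ≤ n) :
    ∃ p, runP d q (wordPow u m) = some p := by
  obtain ⟨t, rfl⟩ := Nat.exists_eq_add_of_le hmn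
  rw [wordPow_add, runP_append, Option.bind_eq_some_iff] at h
  exact h.imp fun _ => And.left

theorem exists_runP_wordPow_eq_self [Finite Q]
    (hd : ∀ a q q' r, d a q = some r → d a q' = some r → q = q') {q r : Q} {u : List A} {n : ℕ}
    (hn : Nat.card Q ≤ n) (h : runP d q (wordPow u n) = some r) :
    ∃ m, 0 < m ∧ runP d q (wordPow u m) = some q := by
  choose f hf using fun t : Fin (n + 1) => exists_runP_wordPow_of_le h (Nat.le_of_lt_succ t.2)
  have not_injective : ¬ Function.Injective f := fun hinj => by
    have := Nat.card_le_card_of_injective f hinj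
    rw [Nat.card_fin] at this
    omega
  obtain ⟨x, y, hxy, hlt⟩ : ∃ x y, f x = f y ∧ x < y := by
    rw [Function.not_injective_iff] at not_injective
    obtain ⟨x, y, hxy, hne⟩ := not_injective
    exact hne.lt_or_gt.elim (⟨x, y, hxy, ·⟩) (⟨y, x, hxy.symm, ·⟩)
  obtain ⟨m, hm⟩ := Nat.exists_eq_add_of_le' hlt.le
  have hy := hf y
  rw [hm, wordPow_add, runP_append, Option.bind_eq_some_iff] at hy
  obtain ⟨p, hqp, hp⟩ := hy
  obtain rfl : p = q := runP_injective hd hp (hxy ▸ hf x)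
  exact ⟨m, by omega, hqp⟩

end RunP

namespace MRFA

variable {A : Type}

theorem ncard_le_ncard_init_of_pairwise {Q : Type} [Finite Q] (M : MRFA A Q) {S : Set (List A)}
    (hpow : ∀ u ∈ S, ∀ n, wordPow u n ∈ M.Language)
    (hsep : S.Pairwise fun u v => ∀ m n, 0 < m → 0 < n →
      wordPow u m ++ wordPow v n ∉ M.Language) :
    S.ncard ≤ M.init.ncard := by
  choose f hf r hr hrun using fun u : S => hpow u u.2 (Nat.card Q + 1)
  rw [← Nat.card_coe_set_eq, ← Nat.card_coe_set_eq]
  refine Nat.card_le_card_of_injective (fun u => (⟨f u, hf u⟩ : M.init)) fun u v huv => ?_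
  have same_init : f u = f v := congrArg Subtype.val huv
  by_contra hne
  obtain ⟨m, hm, hloop⟩ := exists_runP_wordPow_eq_self M.inj (Nat.le_succ _) (hrun u)
  refine hsep u.2 v.2 (Subtype.coe_ne_coe.2 hne) m (Nat.card Q + 1) hm (Nat.succ_pos _)
    ⟨f u, hf u, r v, hr v, ?_⟩
  rw [runP_append, hloop, Option.bind_some, same_init, hrun v]

/-- The disjoint union of a family of reversible automata, recognizing the union of their
languages. -/
def sigma {ι : Type} {Q : ι → Type} (M : ∀ i, MRFA A (Q i)) : MRFA A (Σ i, Q i) where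
  init := {q | q.2 ∈ (M q.1).init}
  next a q := ((M q.1).next a q.2).map (Sigma.mk q.1)
  inj := by
    rintro a ⟨i, q⟩ ⟨i', q'⟩ r h h'
    obtain ⟨p, hp, rfl⟩ := Option.map_eq_some_iff.1 h
    obtain ⟨p', hp', heq⟩ := Option.map_eq_some_iff.1 h'
    obtain ⟨rfl, heq⟩ := Sigma.mk.inj heq
    obtain rfl := eq_of_heq heq
    rw [(M _).inj a q q' _ hp hp']
  accept := {q | q.2 ∈ (M q.1).accept}

section Sigma

variable {ι : Type} {Q : ι → Type} (M : ∀ i, MRFA A (Q i))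

theorem runP_sigma_next (i : ι) (q : Q i) (w : List A) :
    runP (sigma M).next ⟨i, q⟩ w = (runP (M i).next q w).map (Sigma.mk i) := by
  induction w generalizing q with
  | nil => rfl
  | cons a w ih =>
    rw [runP_cons, runP_cons, Option.map_bind]
    simp only [sigma, Option.bind_map] at ih ⊢
    exact congrArg _ (funext ih)

theorem language_sigma : (sigma M).Language = ⋃ i, (M i).Language := by
  ext w
  rw [Set.mem_iUnion]
  constructor
  · rintro ⟨⟨i, q⟩, hq, r, hr, h⟩
    rw [runP_sigma_next, Option.map_eq_some_iff] at h
    obtain ⟨p, hp, rfl⟩ := h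
    exact ⟨i, q, hq, p, hr, hp⟩
  · rintro ⟨i, q, hq, r, hr, h⟩
    exact ⟨⟨i, q⟩, hq, ⟨i, r⟩, hr, by rw [runP_sigma_next, h, Option.map_some]⟩

theorem ncard_init_sigma [Fintype ι] [∀ i, Finite (Q i)] :
    (sigma M).init.ncard = ∑ i, (M i).init.ncard := by
  let e : (sigma M).init ≃ Σ i, (M i).init :=
    { toFun q := ⟨q.1.1, q.1.2, q.2⟩
      invFun q := ⟨⟨q.1, q.2.1⟩, q.2.2⟩ }
  simp only [← Nat.card_coe_set_eq, Nat.card_congr e, Nat.card_sigma]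

end Sigma

/-- The cycle labelled by the letters of `u`, recognizing `u*`: position `p` stands for the prefix
of `u` of length `p`, and the whole of `u` is identified with the empty prefix. -/
noncomputable def cycle (u : List A) : MRFA A (Fin u.length) where
  init := {p | p.val = 0}
  next a p := if u[p] = a then some (finRotate u.length p) else none
  inj := by
    intro a p p' r h h'
    rw [Option.ite_none_right_eq_some] at h h'
    exact (finRotate _).injective (Option.some.inj (h.2.trans h'.2.symm))
  accept := {p | p.val = 0}

section Cycle

variable {u : List A}

theorem exists_take_append_cons_eq_wordPow_iff {p : Fin u.length} {a : A} {w : List A} :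
    (∃ n, u.take p ++ a :: w = wordPow u n) ↔
      u[p] = a ∧ ∃ n, w = u.drop (p + 1) ++ wordPow u n := by
  have split (n : ℕ) :
      wordPow u (n + 1) = u.take p ++ u[p] :: (u.drop (p + 1) ++ wordPow u n) := by
    rw [wordPow_succ, ← List.cons_append, Fin.getElem_fin, List.cons_getElem_drop_succ,
      ← List.append_assoc, List.take_append_drop]
  constructor
  · rintro ⟨_ | n, h⟩
    · simp at h
    · rw [split, List.append_cancel_left_eq, List.cons.injEq] at h
      exact ⟨h.1.symm, n, h.2⟩
  · rintro ⟨rfl, n, rfl⟩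
    exact ⟨n + 1, (split n).symm⟩

theorem exists_take_finRotate_append_eq_wordPow_iff {p : Fin u.length} {w : List A} :
    (∃ n, u.take (finRotate u.length p) ++ w = wordPow u n) ↔
      ∃ n, w = u.drop (p + 1) ++ wordPow u n := by
  have := p.neZero
  have val_eq : (finRotate u.length p : ℕ) = (p + 1) % u.length := by
    rw [finRotate_apply, Fin.val_add, Fin.val_one', Nat.add_mod_mod]
  rw [val_eq]
  rcases (Nat.succ_le_of_lt p.2).eq_or_lt with hlast | hlt
  · simp [← Nat.succ_eq_add_one, hlast]
  rw [Nat.mod_eq_of_lt hlt]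
  have split (n : ℕ) :
      wordPow u (n + 1) = u.take (p + 1) ++ (u.drop (p + 1) ++ wordPow u n) := by
    rw [wordPow_succ, ← List.append_assoc, List.take_append_drop]
  constructor
  · rintro ⟨_ | n, h⟩
    · have := congrArg List.length h
      simp at this
    · exact ⟨n, List.append_cancel_left (h.trans (split n))⟩
  · rintro ⟨n, rfl⟩
    exact ⟨n + 1, (split n).symm⟩

theorem exists_runP_cycle_iff {p : Fin u.length} {w : List A} :
    (∃ q ∈ (cycle u).accept, runP (cycle u).next p w = some q) ↔
      ∃ n, u.take p ++ w = wordPow u n := by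
  induction w generalizing p with
  | nil =>
    constructor
    · rintro ⟨q, hq, h⟩
      obtain rfl : p = q := Option.some.inj h
      have hp : (p : ℕ) = 0 := hq
      exact ⟨0, by simp [hp]⟩
    · rintro ⟨_ | n, h⟩
      · have hp : (p : ℕ) = 0 := by simpa [u.ne_nil_of_length_pos p.pos] using h
        exact ⟨p, hp, rfl⟩
      · have := congrArg List.length h
        simp only [wordPow_succ, List.append_nil, List.length_append, List.length_take] at this
        omega
  | cons a w ih =>
    rw [exists_take_append_cons_eq_wordPow_iff, ← exists_take_finRotate_append_eq_wordPow_iff,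
      ← ih]
    by_cases h : u[p] = a
    · have next_eq : (cycle u).next a p = some (finRotate u.length p) := if_pos h
      simp only [runP_cons, next_eq, Option.bind_some, h, true_and]
    · have next_eq : (cycle u).next a p = none := if_neg h
      simp only [runP_cons, next_eq, h, Option.bind_none, reduceCtorEq, and_false, exists_false,
        false_and]

theorem language_cycle (hu : u ≠ []) : (cycle u).Language = Set.range (wordPow u) := by
  let p₀ : Fin u.length := ⟨0, List.length_pos_iff.2 hu⟩
  have from_zero (w : List A) :
      (∃ q ∈ (cycle u).accept, runP (cycle u).next p₀ w = some q) ↔ w ∈ Set.range (wordPow u) := by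
    simpa [p₀, eq_comm] using exists_runP_cycle_iff (p := p₀) (w := w)
  ext w
  rw [← from_zero]
  constructor
  · rintro ⟨p, hp, h⟩
    obtain rfl : p = p₀ := Fin.ext hp
    exact h
  · exact fun h => ⟨p₀, rfl, h⟩

theorem ncard_init_cycle (hu : u ≠ []) : (cycle u).init.ncard = 1 := by
  refine Set.ncard_eq_one.2 ⟨⟨0, List.length_pos_iff.2 hu⟩, ?_⟩
  ext p
  simp [cycle, Fin.ext_iff]

end Cycle

end MRFA

theorem stmt16_general {A : Type} {S : Set (List A)} (hfin : S.Finite)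
    (hS : InformationTheory.UniquelyDecodable S) :
    (∃ (Q : Type) (_ : Fintype Q) (M : MRFA A Q),
      M.init.ncard = S.ncard ∧ M.Language = ⋃ u ∈ S, Set.range (wordPow u)) ∧
    ∀ (Q : Type) [Fintype Q] (M : MRFA A Q),
      M.init.ncard < S.ncard → M.Language ≠ ⋃ u ∈ S, Set.range (wordPow u) := by
  constructor
  · have := hfin.fintype
    have ne_nil (u : S) : u.1 ≠ [] := fun h => hS.epsilon_not_mem (h ▸ u.2)
    refine ⟨_, inferInstance, MRFA.sigma fun u : S => MRFA.cycle u.1, ?_, ?_⟩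
    · simp [MRFA.ncard_init_sigma, MRFA.ncard_init_cycle, ne_nil]
    · simp [MRFA.language_sigma, MRFA.language_cycle, ne_nil, Set.iUnion_subtype]
  · intro Q _ M hlt hM
    refine hlt.not_ge (M.ncard_le_ncard_init_of_pairwise (fun u hu n => ?_)
      fun u hu v hv hne m n hm hn h => ?_)
    · rw [hM]
      exact Set.mem_biUnion hu ⟨n, rfl⟩
    · rw [hM] at h
      obtain ⟨w, hw, t, ht⟩ := Set.mem_iUnion₂.1 h
      exact hne (eq_of_wordPow_append_wordPow_eq hS hu hv hw hm hn ht.symm)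

/-- for `k ≥ 2`, the language `⋃_{i=1}^{k} (a bⁱ)*` is recognized
by an MRFA with exactly `k` initial states, but by no MRFA with fewer than `k`
initial states. -/
theorem stmt16 (k : ℕ) (hk : 2 ≤ k) :
    (∃ (Q : Type) (_ : Fintype Q) (M : MRFA Bool Q),
      M.init.ncard = k ∧ M.Language = Lstar k) ∧
    ∀ (Q : Type) [Fintype Q] (M : MRFA Bool Q),
      M.init.ncard < k → M.Language ≠ Lstar k := by
  simpa only [ncard_image_abWord_Icc, ← Lstar_eq_iUnion_range_wordPow] using
    stmt16_general ((Set.finite_Icc 1 k).image abWord) (uniquelyDecodable_image_abWord _)
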